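/- (Invariance and monotonicity along the first flow) Let ρ > 0, let h : V → ℝ satisfy max_{x∈V} h(x) > 0, and let u : V × [0,T) → ℝ be a solution of the first mean field flow ∂_t e^{u} = −Lu + ρ( h e^{u} / ∫_V h e^{u} dμ − 1/|V| ) with u(·,0) = u₀ and ∫_V h e^{u(·,t)} dμ ≠ 0 for all t ∈ [0,T). Then: (i) ∫_V e^{u(·,t)} dμ = ∫_V e^{u₀} dμ for all t ∈ [0,T); (ii) for all 0 ≤ t₁ < t₂ < T one has J_{ρ,h}(u(·,t₂)) ≤ J_{ρ,h}(u(·,t₁)). -/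

import Mathlib

open Real Finset

variable {V : Type*}

/-- Discrete integral: `∫_V f dμ = Σ_x μ(x) f(x)`. -/
noncomputable def intV [Fintype V] (μ f : V → ℝ) : ℝ := ∑ x, μ x * f x

/-- Volume `|V| = Σ_x μ(x)`. -/
noncomputable def volV [Fintype V] (μ : V → ℝ) : ℝ := ∑ x, μ x

/-- The nonlocal (fractional graph Laplacian type) operator
`Lu(x) = (1/μ(x)) Σ_{y ≠ x} W(x,y)(u(x) − u(y))`. -/
noncomputable def opL [Fintype V] [DecidableEq V] (μ : V → ℝ) (W : V → V → ℝ)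
    (u : V → ℝ) (x : V) : ℝ :=
  (1 / μ x) * ∑ y ∈ univ.filter (fun y => y ≠ x), W x y * (u x - u y)

/-- Gradient form `∇u·∇v(x) = (1/(2μ(x))) Σ_{y ≠ x} W(x,y)(u(x)−u(y))(v(x)−v(y))`. -/
noncomputable def gradForm [Fintype V] [DecidableEq V] (μ : V → ℝ) (W : V → V → ℝ)
    (u v : V → ℝ) (x : V) : ℝ :=
  (1 / (2 * μ x)) * ∑ y ∈ univ.filter (fun y => y ≠ x), W x y * (u x - u y) * (v x - v y)

/-- `|∇u|²(x) = ∇u·∇u(x)`. -/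
noncomputable def gradSq [Fintype V] [DecidableEq V] (μ : V → ℝ) (W : V → V → ℝ)
    (u : V → ℝ) (x : V) : ℝ := gradForm μ W u u x


/-- The mean field flow functional
`J_{ρ,h}(u) = (1/2)∫_V |∇u|² dμ − ρ log|∫_V h e^u dμ| + (ρ/|V|) ∫_V u dμ`. -/
noncomputable def Jrhoh [Fintype V] [DecidableEq V] (μ : V → ℝ) (W : V → V → ℝ)
    (h : V → ℝ) (ρ : ℝ) (u : V → ℝ) : ℝ :=
  (1 / 2) * intV μ (gradSq μ W u) - ρ * Real.log |intV μ (fun x => h x * Real.exp (u x))| +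
    (ρ / volV μ) * intV μ u

lemma aux_opL [Fintype V] [DecidableEq V] (μ : V → ℝ) (W : V → V → ℝ)
    (hμ : ∀ x, 0 < μ x) (u : V → ℝ) (x : V) :
    μ x * opL μ W u x = ∑ y, W x y * (u x - u y) := by
  have h1 : ∑ y ∈ univ.filter (fun y => y ≠ x), W x y * (u x - u y)
      = ∑ y, W x y * (u x - u y) := by
    apply Finset.sum_subset (Finset.filter_subset _ _)
    intro y _ hy
    have : y = x := by simpa using hy
    simp [this]
  have := (hμ x).ne'
  rw [opL, h1]
  field_simp

lemma aux_grad [Fintype V] [DecidableEq V] (μ : V → ℝ) (W : V → V → ℝ)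
    (hμ : ∀ x, 0 < μ x) (u : V → ℝ) :
    intV μ (gradSq μ W u) = (1 / 2) * ∑ x, ∑ y, W x y * (u x - u y) ^ 2 := by
  rw [intV, Finset.mul_sum]
  apply Finset.sum_congr rfl
  intro x _
  have h1 : ∑ y ∈ univ.filter (fun y => y ≠ x), W x y * (u x - u y) * (u x - u y)
      = ∑ y, W x y * (u x - u y) ^ 2 := by
    rw [Finset.sum_subset (Finset.filter_subset _ _)]
    · apply Finset.sum_congr rfl
      intro y _
      ring
    intro y _ hy
    have : y = x := by simpa using hy
    simp [this]
  have := (hμ x).ne'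
  rw [gradSq, gradForm, h1]
  field_simp

lemma aux_green [Fintype V] (W : V → V → ℝ)
    (hWsym : ∀ x y, W x y = W y x) (u v : V → ℝ) :
    ∑ x, ∑ y, W x y * (u x - u y) * (v x - v y)
      = 2 * ∑ x, (∑ y, W x y * (u x - u y)) * v x := by
  have h1 : ∑ x, ∑ y, W x y * (u x - u y) * v y
      = - ∑ x, ∑ y, W x y * (u x - u y) * v x := by
    rw [Finset.sum_comm, ← Finset.sum_neg_distrib]
    apply Finset.sum_congr rfl
    intro x _
    rw [← Finset.sum_neg_distrib]
    apply Finset.sum_congr rfl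
    intro y _
    rw [hWsym y x]
    ring
  simp only [mul_sub _ (v _) (v _), Finset.sum_sub_distrib, Finset.sum_mul]
  rw [h1]
  ring

lemma aux_sum_zero [Fintype V] [DecidableEq V] (μ : V → ℝ) (W : V → V → ℝ)
    (hμ : ∀ x, 0 < μ x) (hWsym : ∀ x y, W x y = W y x) (u : V → ℝ) :
    ∑ x, μ x * opL μ W u x = 0 := by
  have := aux_green W hWsym u (fun _ => 1)
  simp only [aux_opL μ W hμ]
  simp only [sub_self, mul_zero, Finset.sum_const_zero, mul_one] at this
  linarith

/-- (Invariance and monotonicity along the first flow) Along any solution of the first mean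
field flow on `[0,T)`: (i) `∫_V e^{u(·,t)} dμ` is conserved; (ii) `J_{ρ,h}(u(·,t))` is
non-increasing. -/
theorem first_flow_invariant_monotone [Fintype V] [Nonempty V] [DecidableEq V]
    (μ : V → ℝ) (W : V → V → ℝ)
    (hμ : ∀ x, 0 < μ x)
    (hWsym : ∀ x y, W x y = W y x)
    (hWpos : ∀ x y, x ≠ y → 0 < W x y)
    (ρ : ℝ) (hρ : 0 < ρ)
    (h : V → ℝ) (hmax : ∃ x, 0 < h x)
    (T : ℝ) (u : ℝ → V → ℝ) (u₀ : V → ℝ) (hinit : u 0 = u₀)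
    (hne : ∀ t ∈ Set.Ico (0 : ℝ) T, intV μ (fun y => h y * Real.exp (u t y)) ≠ 0)
    (hflow : ∀ x, ∀ t ∈ Set.Ico (0 : ℝ) T,
      HasDerivAt (fun s => Real.exp (u s x))
        (-(opL μ W (u t) x) +
          ρ * (h x * Real.exp (u t x) / intV μ (fun y => h y * Real.exp (u t y)) - 1 / volV μ))
        t) :
    (∀ t ∈ Set.Ico (0 : ℝ) T,
      intV μ (fun x => Real.exp (u t x)) = intV μ (fun x => Real.exp (u₀ x))) ∧
    (∀ t₁ t₂ : ℝ, 0 ≤ t₁ → t₁ < t₂ → t₂ < T →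
      Jrhoh μ W h ρ (u t₂) ≤ Jrhoh μ W h ρ (u t₁)) := by
  have hvol : 0 < volV μ := Finset.sum_pos (fun x _ => hμ x) Finset.univ_nonempty
  constructor
  · -- conservation
    have hd : ∀ t ∈ Set.Ico (0 : ℝ) T,
        HasDerivAt (fun s => intV μ (fun x => Real.exp (u s x))) 0 t := by
      intro t ht
      have h1 := HasDerivAt.fun_sum (u := Finset.univ)
        (fun x _ => (hflow x t ht).const_mul (μ x))
      refine h1.congr_deriv ?_
      have hz := aux_sum_zero μ W hμ hWsym (u t)
      have hH := hne t ht
      set H := intV μ (fun y => h y * Real.exp (u t y)) with hHdef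
      have e : ∀ x, μ x * (-(opL μ W (u t) x) + ρ * (h x * Real.exp (u t x) / H - 1 / volV μ))
          = -(μ x * opL μ W (u t) x) + (ρ / H) * (μ x * (h x * Real.exp (u t x)))
            - (ρ / volV μ) * μ x := by
        intro x
        ring
      simp only [e]
      rw [Finset.sum_sub_distrib, Finset.sum_add_distrib, Finset.sum_neg_distrib, hz,
        ← Finset.mul_sum, ← Finset.mul_sum]
      change -0 + ρ / H * H - ρ / volV μ * volV μ = 0
      field_simp
      ring
    intro t ht
    rw [← hinit]
    have hsub : ∀ s ∈ Set.Icc (0 : ℝ) t, s ∈ Set.Ico (0 : ℝ) T :=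
      fun s hs => ⟨hs.1, hs.2.trans_lt ht.2⟩
    exact constant_of_has_deriv_right_zero
      (fun s hs => (hd s (hsub s hs)).continuousAt.continuousWithinAt)
      (fun s hs => (hd s (hsub s ⟨hs.1, hs.2.le⟩)).hasDerivWithinAt) t ⟨ht.1, le_rfl⟩
  · -- monotonicity
    have hd : ∀ t ∈ Set.Ico (0 : ℝ) T, ∃ d ≤ 0,
        HasDerivAt (fun s => Jrhoh μ W h ρ (u s)) d t := by
      intro t ht
      have hH := hne t ht
      have hf := fun x => hflow x t ht
      set H := intV μ (fun y => h y * Real.exp (u t y)) with hHdef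
      set F : V → ℝ := fun x =>
        -(opL μ W (u t) x) + ρ * (h x * Real.exp (u t x) / H - 1 / volV μ) with hF
      set v : V → ℝ := fun x => F x / Real.exp (u t x) with hv
      have hu : ∀ x, HasDerivAt (fun s => u s x) (v x) t := by
        intro x
        have := (hf x).log (Real.exp_pos _).ne'
        simpa only [Real.log_exp] using this
      have hFv : ∀ x, F x = Real.exp (u t x) * v x := by
        intro x
        rw [hv]
        have := (Real.exp_pos (u t x)).ne'
        field_simp
      -- gradient part
      have d1 : HasDerivAt (fun s => intV μ (gradSq μ W (u s)))
          (2 * ∑ x, μ x * opL μ W (u t) x * v x) t := by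
        simp only [aux_grad μ W hμ]
        have := (HasDerivAt.fun_sum (u := Finset.univ) (fun x _ =>
          HasDerivAt.fun_sum (u := Finset.univ) (fun y _ =>
            (((hu x).sub (hu y)).pow 2).const_mul (W x y)))).const_mul (1 / 2 : ℝ)
        refine this.congr_deriv ?_
        simp only [aux_opL μ W hμ]
        rw [← aux_green W hWsym, Finset.mul_sum]
        apply Finset.sum_congr rfl
        intro x _
        rw [Finset.mul_sum]
        apply Finset.sum_congr rfl
        intro y _
        simp only [Pi.sub_apply]
        norm_num
        ring
      have d2 : HasDerivAt (fun s => intV μ (fun x => h x * Real.exp (u s x)))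
          (∑ x, μ x * (h x * F x)) t :=
        HasDerivAt.fun_sum (u := Finset.univ)
          (fun x _ => ((hf x).const_mul (h x)).const_mul (μ x))
      have d3 : HasDerivAt (fun s => intV μ (u s)) (∑ x, μ x * v x) t :=
        HasDerivAt.fun_sum (u := Finset.univ) (fun x _ => (hu x).const_mul (μ x))
      have d2' := d2.log hH
      have key := ((d1.const_mul (1 / 2 : ℝ)).sub (d2'.const_mul ρ)).add
        (d3.const_mul (ρ / volV μ))
      refine ⟨- ∑ x, μ x * (Real.exp (u t x) * v x ^ 2), ?_, ?_⟩
      · rw [neg_nonpos]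
        exact Finset.sum_nonneg fun x _ => mul_nonneg (hμ x).le
          (mul_nonneg (Real.exp_pos _).le (sq_nonneg _))
      · have hfun : (fun s => Jrhoh μ W h ρ (u s)) = (fun s =>
            (1 / 2) * intV μ (gradSq μ W (u s))
            - ρ * Real.log (intV μ (fun x => h x * Real.exp (u s x)))
            + (ρ / volV μ) * intV μ (u s)) := by
          funext s
          rw [Jrhoh, Real.log_abs]
        rw [hfun]
        refine HasDerivAt.congr_deriv key ?_
        rw [← hHdef, ← Finset.sum_neg_distrib, ← mul_assoc, Finset.mul_sum,
          Finset.sum_div, Finset.mul_sum, Finset.mul_sum, ← Finset.sum_sub_distrib,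
          ← Finset.sum_add_distrib]
        apply Finset.sum_congr rfl
        intro x _
        have e1 : μ x * (Real.exp (u t x) * v x ^ 2) = μ x * F x * v x := by
          rw [hFv x]
          ring
        rw [e1, hFv x]
        nth_rewrite 2 [← hFv x]
        rw [hF]
        ring
    intro t₁ t₂ h0 h12 h2
    have hanti : AntitoneOn (fun s => Jrhoh μ W h ρ (u s)) (Set.Icc t₁ t₂) := by
      have hsub : ∀ s ∈ Set.Icc t₁ t₂, s ∈ Set.Ico (0 : ℝ) T :=
        fun s hs => ⟨h0.trans hs.1, hs.2.trans_lt h2⟩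
      apply antitoneOn_of_deriv_nonpos (convex_Icc t₁ t₂)
      · intro s hs
        obtain ⟨d, _, hd'⟩ := hd s (hsub s hs)
        exact hd'.continuousAt.continuousWithinAt
      · intro s hs
        obtain ⟨d, _, hd'⟩ := hd s (hsub s (interior_subset hs))
        exact hd'.differentiableAt.differentiableWithinAt
      · intro s hs
        obtain ⟨d, hd0, hd'⟩ := hd s (hsub s (interior_subset hs))
        rw [hd'.deriv]
        exact hd0
    exact hanti ⟨le_rfl, h12.le⟩ ⟨h12.le, le_rfl⟩ h12.le
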